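/- For all real numbers q, z with 0 < q < 1 and z > 0, one has 2·(1+q²)·S_odd(q⁴, q+q⁻¹)·Σ_{ℓ∈ℤ} q^{(2ℓ)²} z^{2ℓ} = Π_{i≥1} (1 + q^{2i−1}z)(1 + q^{2i−1}z⁻¹) + Π_{i≥1} (1 − q^{2i−1}z)(1 − q^{2i−1}z⁻¹), where the sum over ℓ and the infinite products converge absolutely. (Note that 0 < q⁴ < 1 and q+q⁻¹ ≥ 1, so S_odd(q⁴, q+q⁻¹) is defined.) -/

import Mathlib

/-!
Two evaluations are combined. The first is the Jacobi triple product
`∏ (1 + q^{2i-1} z) (1 + q^{2i-1} z⁻¹) = (q²; q²)_∞⁻¹ ∑ q^{n²} z^n`. By the `q`-Pascal rule, the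
coefficients of `∏_{i<M} (1 + q^{2i+1} z) ∏_{i<N} (1 + q^{2i+1} z⁻¹)` are Gaussian binomial
coefficients times `q^{n²}`; let `M = N → ∞` by dominated convergence. Adding the identities at `z`
and `-z` keeps twice the even part of the theta series.

The second is `(1 + q²) S_odd(q⁴, q + q⁻¹) = (q²; q²)_∞⁻¹`. Measured relative to the ground state,
the weight of a sequence is a product over its places, so the sum over sequences in the ground state
from place `n` on obeys a recursion in `n` with two states, according to whether a zero may come
next. With `x = q²` both components have closed forms over `(x; x)_n`, depending on the parity of
`n`, and the limit along even `n` gives `S_odd`.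
-/

open scoped BigOperators

/-- `He` is the set of sequences `(ω_{-i})_{i ≥ 1}` of non-negative integers (indexed here by
`n : ℕ` with `i = n + 1`) with no two consecutive vanishing entries, agreeing for large `i`
with the sequence which is `1` at even `i` and `0` at odd `i`. -/
def He : Set (ℕ → ℕ) :=
  {ω | (∀ n : ℕ, ¬(ω n = 0 ∧ ω (n + 1) = 0)) ∧
       (∃ N : ℕ, ∀ n ≥ N, ω n = if (n + 1) % 2 = 0 then 1 else 0)}

/-- `Ho` is as `He`, but agreeing for large `i` with the sequence which is `1` at odd `i`
and `0` at even `i`. -/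
def Ho : Set (ℕ → ℕ) :=
  {ω | (∀ n : ℕ, ¬(ω n = 0 ∧ ω (n + 1) = 0)) ∧
       (∃ N : ℕ, ∀ n ≥ N, ω n = if (n + 1) % 2 = 1 then 1 else 0)}

/-- `A(ω) = Σ_{i odd} i·ω_{-i} + Σ_{i even} i·(ω_{-i} − 1)`. -/
noncomputable def Afun (ω : ℕ → ℕ) : ℤ :=
  ∑ᶠ n : ℕ, (if (n + 1) % 2 = 1 then ((n : ℤ) + 1) * (ω n : ℤ)
             else ((n : ℤ) + 1) * ((ω n : ℤ) - 1))

/-- `B(ω) = 2·(Σ_{i odd} 1{ω_{-i} ≥ 1} − Σ_{i even} 1{ω_{-i} = 0})`. -/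
noncomputable def Bfun (ω : ℕ → ℕ) : ℤ :=
  2 * ((∑ᶠ n : ℕ, if (n + 1) % 2 = 1 ∧ 1 ≤ ω n then (1 : ℤ) else 0)
     - (∑ᶠ n : ℕ, if (n + 1) % 2 = 0 ∧ ω n = 0 then (1 : ℤ) else 0))

/-- `A'(ω) = Σ_{i even} i·ω_{-i} + Σ_{i odd} i·(ω_{-i} − 1)`. -/
noncomputable def A'fun (ω : ℕ → ℕ) : ℤ :=
  ∑ᶠ n : ℕ, (if (n + 1) % 2 = 0 then ((n : ℤ) + 1) * (ω n : ℤ)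
             else ((n : ℤ) + 1) * ((ω n : ℤ) - 1))

/-- `B'(ω) = 2·(Σ_{i even} 1{ω_{-i} ≥ 1} − Σ_{i odd} 1{ω_{-i} = 0})`. -/
noncomputable def B'fun (ω : ℕ → ℕ) : ℤ :=
  2 * ((∑ᶠ n : ℕ, if (n + 1) % 2 = 0 ∧ 1 ≤ ω n then (1 : ℤ) else 0)
     - (∑ᶠ n : ℕ, if (n + 1) % 2 = 1 ∧ ω n = 0 then (1 : ℤ) else 0))

/-- `S_even(q̃, t) = Σ_{ω ∈ H_e} q̃^{A(ω)} t^{B(ω)}`. -/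
noncomputable def Seven (q t : ℝ) : ℝ := ∑' ω : He, q ^ Afun ω.1 * t ^ Bfun ω.1

/-- `S_odd(q̃, t) = Σ_{ω ∈ H_o} q̃^{A'(ω)} t^{B'(ω)}`. -/
noncomputable def Sodd (q t : ℝ) : ℝ := ∑' ω : Ho, q ^ A'fun ω.1 * t ^ B'fun ω.1

open Filter Topology

section QPochhammer

/-- The finite `q`-Pochhammer symbol `(x; x)_n = ∏_{i=1}^n (1 - x^i)`. -/
def qPochhammer {R : Type*} [CommRing R] (x : R) (n : ℕ) : R :=
  ∏ i ∈ Finset.range n, (1 - x ^ (i + 1))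

/-- The reciprocal `1 / (x; x)_k` for `k : ℤ`, with the convention that it vanishes for `k < 0`,
which is the one that extends the recursion in `k` to all of `ℤ`. -/
def qPochhammerInv {𝕜 : Type*} [Field 𝕜] (x : 𝕜) : ℤ → 𝕜
  | (n : ℕ) => (qPochhammer x n)⁻¹
  | Int.negSucc _ => 0

section Algebraic

variable {R 𝕜 : Type*} [CommRing R] [Field 𝕜] {x : 𝕜}

@[simp]
lemma qPochhammer_zero (x : R) : qPochhammer x 0 = 1 := Finset.prod_range_zero _

lemma qPochhammer_succ (x : R) (n : ℕ) :
    qPochhammer x (n + 1) = qPochhammer x n * (1 - x ^ (n + 1)) :=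
  Finset.prod_range_succ _ _

@[simp]
lemma qPochhammerInv_natCast (x : 𝕜) (n : ℕ) : qPochhammerInv x n = (qPochhammer x n)⁻¹ := rfl

@[simp]
lemma qPochhammerInv_zero (x : 𝕜) : qPochhammerInv x 0 = 1 := by
  simpa using qPochhammerInv_natCast x 0

lemma qPochhammerInv_of_neg (x : 𝕜) {k : ℤ} (hk : k < 0) : qPochhammerInv x k = 0 := by
  obtain ⟨n, rfl⟩ := Int.eq_negSucc_of_lt_zero hk
  rfl

lemma one_sub_pow_ne_zero (hx : ¬IsOfFinOrder x) {n : ℕ} (hn : n ≠ 0) : 1 - x ^ n ≠ 0 := fun h =>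
  hx (isOfFinOrder_iff_pow_eq_one.mpr ⟨n, Nat.pos_of_ne_zero hn, (sub_eq_zero.mp h).symm⟩)

lemma qPochhammerInv_sub_one (hx : ¬IsOfFinOrder x) (k : ℤ) :
    qPochhammerInv x (k - 1) = (1 - x ^ k) * qPochhammerInv x k := by
  rcases lt_trichotomy k 0 with hk | rfl | hk
  · simp [qPochhammerInv_of_neg, hk, hk.trans one_pos]
  · simp [qPochhammerInv_of_neg]
  · obtain ⟨n, rfl⟩ : ∃ n : ℕ, k = ↑(n + 1) := ⟨(k - 1).toNat, by omega⟩
    rw [show ((n + 1 : ℕ) : ℤ) - 1 = n by push_cast; ring, qPochhammerInv_natCast,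
      qPochhammerInv_natCast, zpow_natCast, qPochhammer_succ, mul_inv, mul_comm, mul_assoc,
      inv_mul_cancel₀ (one_sub_pow_ne_zero hx n.succ_ne_zero), mul_one]

end Algebraic

section Analytic

variable {𝕜 : Type*} [NormedField 𝕜] {x : 𝕜}

lemma not_isOfFinOrder_of_norm_lt_one (hx : ‖x‖ < 1) : ¬IsOfFinOrder x := fun h =>
  hx.ne h.norm_eq_one

lemma qPochhammer_ne_zero (hx : ‖x‖ < 1) (n : ℕ) : qPochhammer x n ≠ 0 :=
  Finset.prod_ne_zero_iff.mpr fun i _ =>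
    one_sub_pow_ne_zero (not_isOfFinOrder_of_norm_lt_one hx) i.succ_ne_zero

lemma summable_norm_neg_pow_succ (hx : ‖x‖ < 1) : Summable fun n : ℕ => ‖-x ^ (n + 1)‖ := by
  simpa only [norm_neg, norm_pow] using
    (summable_nat_add_iff 1).mpr (summable_geometric_of_lt_one (norm_nonneg x) hx)

variable [CompleteSpace 𝕜]

lemma multipliable_one_sub_pow_succ (hx : ‖x‖ < 1) :
    Multipliable fun n : ℕ => 1 - x ^ (n + 1) := by
  simp only [sub_eq_add_neg]
  exact multipliable_one_add_of_summable (summable_norm_neg_pow_succ hx)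

lemma tendsto_qPochhammer (hx : ‖x‖ < 1) :
    Tendsto (qPochhammer x) atTop (𝓝 (∏' n : ℕ, (1 - x ^ (n + 1)))) :=
  (multipliable_one_sub_pow_succ hx).hasProd.tendsto_prod_nat

lemma tprod_one_sub_pow_succ_ne_zero (hx : ‖x‖ < 1) : ∏' n : ℕ, (1 - x ^ (n + 1)) ≠ 0 := by
  simp only [sub_eq_add_neg]
  refine tprod_one_add_ne_zero_of_summable (fun n => ?_) (summable_norm_neg_pow_succ hx)
  rw [← sub_eq_add_neg]
  exact one_sub_pow_ne_zero (not_isOfFinOrder_of_norm_lt_one hx) n.succ_ne_zero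

lemma tendsto_qPochhammerInv (hx : ‖x‖ < 1) :
    Tendsto (qPochhammerInv x) atTop (𝓝 (∏' n : ℕ, (1 - x ^ (n + 1)))⁻¹) := by
  rw [← Nat.map_cast_int_atTop, tendsto_map'_iff]
  exact (tendsto_qPochhammer hx).inv₀ (tprod_one_sub_pow_succ_ne_zero hx)

lemma exists_norm_qPochhammer_le (hx : ‖x‖ < 1) : ∃ C, ∀ n, ‖qPochhammer x n‖ ≤ C := by
  obtain ⟨C, hC⟩ := (tendsto_qPochhammer hx).norm.bddAbove_range
  exact ⟨C, Set.forall_mem_range.mp hC⟩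

lemma exists_norm_qPochhammerInv_le (hx : ‖x‖ < 1) : ∃ C, ∀ k, ‖qPochhammerInv x k‖ ≤ C := by
  obtain ⟨C, hC⟩ :=
    ((tendsto_qPochhammerInv hx).comp tendsto_natCast_atTop_atTop).norm.bddAbove_range
  refine ⟨C, fun k => ?_⟩
  have hCn (n : ℕ) : ‖qPochhammerInv x n‖ ≤ C := hC ⟨n, rfl⟩
  obtain ⟨n, rfl | rfl⟩ := k.eq_nat_or_neg
  · exact hCn n
  · rcases n.eq_zero_or_pos with rfl | hn
    · simpa using hCn 0
    · rw [qPochhammerInv_of_neg x (by omega), norm_zero]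
      exact (norm_nonneg _).trans (hCn 0)

end Analytic

end QPochhammer

section JacobiTripleProduct

section Finite

variable {𝕜 : Type*} [Field 𝕜] {q z : 𝕜}

/-- The coefficient of `z^n` in `∏_{i<M} (1 + q^{2i+1} z) · ∏_{i<N} (1 + q^{2i+1} / z)`, namely
`q^{n²}` times the Gaussian binomial coefficient `[M + N, N + n]` in base `q²`. -/
def jacobiCoeff (q : 𝕜) (M N : ℕ) (n : ℤ) : 𝕜 :=
  qPochhammer (q ^ 2) (M + N) * qPochhammerInv (q ^ 2) (M - n) * qPochhammerInv (q ^ 2) (N + n) *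
    q ^ (n ^ 2)

lemma jacobiCoeff_swap (q : 𝕜) (M N : ℕ) (n : ℤ) :
    jacobiCoeff q M N (-n) = jacobiCoeff q N M n := by
  simp only [jacobiCoeff, add_comm M N, neg_sq, sub_neg_eq_add, ← sub_eq_add_neg]
  ring

lemma jacobiCoeff_zero_zero (q : 𝕜) (n : ℤ) : jacobiCoeff q 0 0 n = if n = 0 then 1 else 0 := by
  rcases lt_trichotomy n 0 with hn | rfl | hn
  · simp [jacobiCoeff, qPochhammerInv_of_neg, hn, hn.ne]
  · simp [jacobiCoeff]
  · simp [jacobiCoeff, qPochhammerInv_of_neg, hn, hn.ne']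

/- With `x = q²`, this is the `q`-Pascal rule, which rests on
`1 - x^{M+N+1} = (1 - x^{M+1-n}) + x^{M+1-n} (1 - x^{N+n})`. -/
lemma jacobiCoeff_succ_left (hq0 : q ≠ 0) (hq : ¬IsOfFinOrder (q ^ 2)) (M N : ℕ) (n : ℤ) :
    jacobiCoeff q (M + 1) N n =
      jacobiCoeff q M N n + q ^ (2 * M + 1) * jacobiCoeff q M N (n - 1) := by
  have hx0 : q ^ 2 ≠ 0 := pow_ne_zero 2 hq0
  have hM : qPochhammerInv (q ^ 2) (M - n) =
      (1 - (q ^ 2) ^ ((M : ℤ) + 1 - n)) * qPochhammerInv (q ^ 2) (M + 1 - n) := by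
    rw [← qPochhammerInv_sub_one hq]; ring_nf
  have hN : qPochhammerInv (q ^ 2) (N + (n - 1)) =
      (1 - (q ^ 2) ^ ((N : ℤ) + n)) * qPochhammerInv (q ^ 2) (N + n) := by
    rw [← qPochhammerInv_sub_one hq]; ring_nf
  have hsplit : (q ^ 2) ^ (M + N + 1) =
      (q ^ 2) ^ ((M : ℤ) + 1 - n) * (q ^ 2) ^ ((N : ℤ) + n) := by
    rw [← zpow_natCast, ← zpow_add₀ hx0]
    congr 1
    push_cast
    ring
  have hexp : q ^ (2 * M + 1) * q ^ ((n - 1) ^ 2) =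
      (q ^ 2) ^ ((M : ℤ) + 1 - n) * q ^ (n ^ 2) := by
    rw [← zpow_natCast, ← zpow_natCast, ← zpow_mul, ← zpow_add₀ hq0, ← zpow_add₀ hq0]
    congr 1
    push_cast
    ring
  simp only [jacobiCoeff, add_right_comm M 1 N, qPochhammer_succ, hM, hN, hsplit,
    show (M : ℤ) - (n - 1) = M + 1 - n by ring, Nat.cast_succ]
  linear_combination (-qPochhammer (q ^ 2) (M + N) * qPochhammerInv (q ^ 2) (M + 1 - n) *
    (1 - (q ^ 2) ^ ((N : ℤ) + n)) * qPochhammerInv (q ^ 2) (N + n)) * hexp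

variable [TopologicalSpace 𝕜]

lemma hasSum_jacobiCoeff_swap {M N : ℕ} {P : 𝕜}
    (h : HasSum (fun n : ℤ => jacobiCoeff q M N n * z⁻¹ ^ n) P) :
    HasSum (fun n : ℤ => jacobiCoeff q N M n * z ^ n) P := by
  rw [← (Equiv.neg ℤ).hasSum_iff] at h
  simpa [Function.comp_def, jacobiCoeff_swap] using h

variable [IsTopologicalRing 𝕜]

lemma hasSum_jacobiCoeff_succ_left (hq0 : q ≠ 0) (hq : ¬IsOfFinOrder (q ^ 2)) (hz : z ≠ 0)
    {M N : ℕ} {P : 𝕜} (h : HasSum (fun n : ℤ => jacobiCoeff q M N n * z ^ n) P) :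
    HasSum (fun n : ℤ => jacobiCoeff q (M + 1) N n * z ^ n) (P * (1 + q ^ (2 * M + 1) * z)) := by
  have hshift := (Equiv.subRight (1 : ℤ)).hasSum_iff.mpr h
  convert h.add (hshift.mul_left (q ^ (2 * M + 1) * z)) using 1
  · funext n
    simp only [Function.comp_apply, Equiv.subRight_apply, jacobiCoeff_succ_left hq0 hq,
      zpow_sub_one₀ hz]
    field_simp
  · ring

theorem hasSum_jacobiCoeff (hq0 : q ≠ 0) (hq : ¬IsOfFinOrder (q ^ 2)) (hz : z ≠ 0) (N : ℕ) :
    HasSum (fun n : ℤ => jacobiCoeff q N N n * z ^ n)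
      (∏ i ∈ Finset.range N, (1 + q ^ (2 * i + 1) * z) * (1 + q ^ (2 * i + 1) * z⁻¹)) := by
  induction N with
  | zero =>
    simpa [jacobiCoeff_zero_zero] using
      hasSum_single (f := fun n : ℤ => jacobiCoeff q 0 0 n * z ^ n) 0 fun n hn => by
        simp [jacobiCoeff_zero_zero, hn]
  | succ N ih =>
    have hsucc := hasSum_jacobiCoeff_succ_left hq0 hq hz ih
    rw [← inv_inv z] at hsucc
    have hswap := hasSum_jacobiCoeff_succ_left hq0 hq (inv_ne_zero hz)
      (hasSum_jacobiCoeff_swap hsucc)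
    rw [Finset.prod_range_succ, ← mul_assoc]
    refine hasSum_jacobiCoeff_swap ?_
    simpa only [inv_inv] using hswap

end Finite

section Infinite

variable {𝕜 : Type*} [NormedField 𝕜] {q : 𝕜}

lemma norm_sq_lt_one (hq : ‖q‖ < 1) : ‖q ^ 2‖ < 1 := by
  simpa using pow_lt_one₀ (norm_nonneg q) hq two_ne_zero

variable [CompleteSpace 𝕜]

lemma summable_pow_sq_mul_pow (hq : ‖q‖ < 1) (z : 𝕜) :
    Summable fun n : ℕ => q ^ (n ^ 2) * z ^ n := by
  have hlim : Tendsto (fun n : ℕ => ‖q ^ n * z‖) atTop (𝓝 0) := by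
    simpa using ((tendsto_pow_atTop_nhds_zero_of_norm_lt_one hq).mul_const z).norm
  refine Summable.of_norm_bounded_eventually_nat (summable_geometric_two) ?_
  filter_upwards [hlim.eventually_le_const one_half_pos] with n hn
  rw [sq, pow_mul, ← mul_pow, norm_pow]
  exact pow_le_pow_left₀ (norm_nonneg _) hn n

lemma summable_zpow_sq_mul_zpow (hq : ‖q‖ < 1) (z : 𝕜) :
    Summable fun n : ℤ => q ^ (n ^ 2) * z ^ n := by
  refine Summable.of_nat_of_neg ((summable_pow_sq_mul_pow hq z).congr fun n => ?_)
    ((summable_pow_sq_mul_pow hq z⁻¹).congr fun n => ?_)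
  · norm_cast
  · rw [neg_sq, zpow_neg, inv_pow]
    norm_cast

lemma multipliable_one_add_odd_pow_mul (hq : ‖q‖ < 1) (z : 𝕜) :
    Multipliable fun i : ℕ => 1 + q ^ (2 * i + 1) * z := by
  refine multipliable_one_add_of_summable ?_
  have hodd := (summable_geometric_of_lt_one (norm_nonneg q) hq).comp_injective
    (i := fun i : ℕ => 2 * i + 1) fun a b h => by simpa using h
  simpa using hodd.mul_right ‖z‖

lemma multipliable_jacobi (hq : ‖q‖ < 1) (z : 𝕜) :
    Multipliable fun i : ℕ => (1 + q ^ (2 * i + 1) * z) * (1 + q ^ (2 * i + 1) * z⁻¹) :=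
  (multipliable_one_add_odd_pow_mul hq z).mul (multipliable_one_add_odd_pow_mul hq z⁻¹)

lemma tendsto_jacobiCoeff (hq : ‖q‖ < 1) (n : ℤ) :
    Tendsto (fun N => jacobiCoeff q N N n) atTop
      (𝓝 ((∏' i : ℕ, (1 - (q ^ 2) ^ (i + 1)))⁻¹ * q ^ (n ^ 2))) := by
  have hx := norm_sq_lt_one hq
  have hnum := (tendsto_qPochhammer hx).comp (tendsto_id.atTop_add_atTop tendsto_id)
  have hsub := (tendsto_qPochhammerInv hx).comp
    (tendsto_atTop_add_const_right _ (-n) tendsto_natCast_atTop_atTop)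
  have hadd := (tendsto_qPochhammerInv hx).comp
    (tendsto_atTop_add_const_right _ n tendsto_natCast_atTop_atTop)
  have hmul := ((hnum.mul hsub).mul hadd).mul_const (q ^ (n ^ 2))
  rwa [mul_inv_cancel₀ (tprod_one_sub_pow_succ_ne_zero hx), one_mul] at hmul

lemma exists_norm_jacobiCoeff_le (hq : ‖q‖ < 1) :
    ∃ C, ∀ M N n, ‖jacobiCoeff q M N n‖ ≤ C * ‖q‖ ^ (n ^ 2) := by
  obtain ⟨C, hC⟩ := exists_norm_qPochhammer_le (norm_sq_lt_one hq)
  obtain ⟨D, hD⟩ := exists_norm_qPochhammerInv_le (norm_sq_lt_one hq)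
  have hC0 : 0 ≤ C := (norm_nonneg _).trans (hC 0)
  have hD0 : 0 ≤ D := (norm_nonneg _).trans (hD 0)
  refine ⟨C * D * D, fun M N n => ?_⟩
  simp only [jacobiCoeff, norm_mul, norm_zpow]
  gcongr
  exacts [hC _, hD _, hD _]

theorem tprod_jacobi_eq (hq0 : q ≠ 0) (hq : ‖q‖ < 1) {z : 𝕜} (hz : z ≠ 0) :
    ∏' i : ℕ, (1 + q ^ (2 * i + 1) * z) * (1 + q ^ (2 * i + 1) * z⁻¹) =
      (∏' i : ℕ, (1 - (q ^ 2) ^ (i + 1)))⁻¹ * ∑' n : ℤ, q ^ (n ^ 2) * z ^ n := by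
  have hfin := hasSum_jacobiCoeff hq0 (not_isOfFinOrder_of_norm_lt_one (norm_sq_lt_one hq)) hz
  obtain ⟨C, hC⟩ := exists_norm_jacobiCoeff_le hq
  have hbound : Summable fun n : ℤ => C * (‖q‖ ^ (n ^ 2) * ‖z‖ ^ n) :=
    (summable_zpow_sq_mul_zpow (by simpa using hq) ‖z‖).mul_left C
  have hlim := tendsto_tsum_of_dominated_convergence hbound
    (fun n => (tendsto_jacobiCoeff hq n).mul_const (z ^ n)) <| .of_forall fun N n => by
      rw [norm_mul, norm_zpow, ← mul_assoc]
      gcongr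
      exact hC N N n
  simp only [(hfin _).tsum_eq, mul_assoc] at hlim
  rw [← tsum_mul_left]
  exact tendsto_nhds_unique (multipliable_jacobi hq z).hasProd.tendsto_prod_nat
    (by simpa only [mul_assoc] using hlim)

lemma tsum_zpow_sq_add_tsum_neg (hq : ‖q‖ < 1) (z : 𝕜) :
    (∑' n : ℤ, q ^ (n ^ 2) * z ^ n) + ∑' n : ℤ, q ^ (n ^ 2) * (-z) ^ n =
      2 * ∑' ℓ : ℤ, q ^ ((2 * ℓ) ^ 2) * z ^ (2 * ℓ) := by
  rw [← (summable_zpow_sq_mul_zpow hq z).tsum_add (summable_zpow_sq_mul_zpow hq (-z)),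
    ← tsum_mul_left, ← (mul_right_injective₀ (two_ne_zero (α := ℤ))).tsum_eq]
  · refine tsum_congr fun ℓ => ?_
    rw [(even_two_mul ℓ).neg_zpow]
    ring
  · refine Function.support_subset_iff'.mpr fun n hn => ?_
    have hodd : Odd n := Int.not_even_iff_odd.mp fun h => hn (h.two_dvd.imp fun _ => Eq.symm)
    simp [hodd.neg_zpow]

end Infinite

end JacobiTripleProduct

section TransferMatrix

lemma hasSum_iUnion_of_monotone {α ι : Type*} [SemilatticeSup ι] [Nonempty ι] {f : α → ℝ}
    (hf : ∀ x, 0 ≤ f x) {s : ι → Set α} (hs : Monotone s) {a : ι → ℝ} {l : ℝ}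
    (ha : ∀ i, HasSum (fun x : s i => f x) (a i)) (hl : Tendsto a atTop (𝓝 l)) :
    HasSum (fun x : ⋃ i, s i => f x) l := by
  replace ha i : HasSum ((s i).indicator f) (a i) := hasSum_subtype_iff_indicator.mp (ha i)
  refine hasSum_subtype_iff_indicator.mpr (hasSum_of_isLUB_of_nonneg _ ?_ ⟨?_, fun b hb => ?_⟩)
  · exact Set.indicator_nonneg fun x _ => hf x
  · rintro _ ⟨T, rfl⟩
    have hT : ∀ᶠ i in atTop, ∀ x ∈ T, (⋃ i, s i).indicator f x = (s i).indicator f x := by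
      refine (Filter.eventually_all_finset T).mpr fun x _ => ?_
      by_cases hx : x ∈ ⋃ i, s i
      · obtain ⟨j, hj⟩ := Set.mem_iUnion.mp hx
        filter_upwards [eventually_ge_atTop j] with i hi
        rw [Set.indicator_of_mem hx, Set.indicator_of_mem (hs hi hj)]
      · refine .of_forall fun i => ?_
        rw [Set.indicator_of_notMem hx,
          Set.indicator_of_notMem fun h => hx (Set.mem_iUnion_of_mem i h)]
    refine ge_of_tendsto hl (hT.mono fun i hi => ?_)
    beta_reduce
    rw [Finset.sum_congr rfl hi]
    exact sum_le_hasSum T (fun x _ => Set.indicator_nonneg (fun x _ => hf x) x) (ha i)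
  · refine le_of_tendsto' hl fun i => hasSum_le_of_sum_le (ha i) fun T => le_trans ?_ (hb ⟨T, rfl⟩)
    exact Finset.sum_le_sum fun x _ =>
      Set.indicator_le_indicator_of_subset (Set.subset_iUnion s i) hf x

/-- If every `ω ∈ S` has the value `b` at `i`, choosing an `ω ∈ S` and a new value in `K` at `i`
amounts to choosing a function with value in `K` at `i` that lies in `S` once this value is
replaced by `b`. -/
def updateEquiv {ι α : Type*} [DecidableEq ι] {S : Set (ι → α)} {i : ι} {b : α}
    (hS : ∀ ω ∈ S, ω i = b) (K : Set α) :
    S × K ≃ {ω : ι → α | Function.update ω i b ∈ S ∧ ω i ∈ K} where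
  toFun p := ⟨Function.update p.1 i p.2, by
    simp [← hS p.1 p.1.2]⟩
  invFun ω := (⟨Function.update ω i b, ω.2.1⟩, ⟨ω.1 i, ω.2.2⟩)
  left_inv p := by
    ext <;> simp [← hS p.1 p.1.2]
  right_inv ω := by simp

/-- The weight of the first `n` entries of `ω`, an entry `k` at place `i` having weight `w i k`. -/
def prefixWeight (w : ℕ → ℕ → ℝ) (n : ℕ) (ω : ℕ → ℕ) : ℝ := ∏ i ∈ Finset.range n, w i (ω i)

/-- The sequences that agree with `g` from place `n` on and have no two consecutive zeros among
their first `n` entries. -/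
def truncated (g : ℕ → ℕ) (n : ℕ) : Set (ℕ → ℕ) :=
  {ω | (∀ i, i + 1 < n → ¬(ω i = 0 ∧ ω (i + 1) = 0)) ∧ ∀ i ≥ n, ω i = g i}

/-- The sequences in `truncated g n` whose entry at place `n` may be replaced by `0`, as their
entry just before place `n`, if there is one, is positive. -/
def truncatedPos (g : ℕ → ℕ) (n : ℕ) : Set (ℕ → ℕ) :=
  {ω ∈ truncated g n | ∀ m, m + 1 = n → ω m ≠ 0}

lemma truncated_zero (g : ℕ → ℕ) : truncated g 0 = {g} := by
  ext ω
  simp [truncated, funext_iff]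

lemma truncatedPos_zero (g : ℕ → ℕ) : truncatedPos g 0 = {g} := by
  simp [truncatedPos, truncated_zero]

lemma truncatedPos_succ (g : ℕ → ℕ) (n : ℕ) :
    truncatedPos g (n + 1) =
      {ω | Function.update ω n (g n) ∈ truncated g n ∧ ω n ∈ ({0}ᶜ : Set ℕ)} := by
  ext ω
  simp only [truncatedPos, truncated, Set.mem_ofPred_eq, Function.update_apply]
  grind

lemma truncated_succ (g : ℕ → ℕ) (n : ℕ) :
    truncated g (n + 1) = truncatedPos g (n + 1) ∪
      {ω | Function.update ω n (g n) ∈ truncatedPos g n ∧ ω n ∈ ({0} : Set ℕ)} := by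
  ext ω
  simp only [truncatedPos, truncated, Set.mem_ofPred_eq, Set.mem_union, Function.update_apply]
  grind

variable {w : ℕ → ℕ → ℝ} {g : ℕ → ℕ} {n : ℕ}

lemma prefixWeight_succ_update (w : ℕ → ℕ → ℝ) (n : ℕ) (ω : ℕ → ℕ) (k : ℕ) :
    prefixWeight w (n + 1) (Function.update ω n k) = prefixWeight w n ω * w n k := by
  rw [prefixWeight, Finset.prod_range_succ, Function.update_self]
  congr 1
  refine Finset.prod_congr rfl fun i hi => ?_
  rw [Function.update_of_ne (Finset.mem_range.mp hi).ne]

lemma hasSum_prefixWeight_succ {S : Set (ℕ → ℕ)} {K : Set ℕ} {b : ℕ} {a c : ℝ}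
    (hS : ∀ ω ∈ S, ω n = b) (ha : HasSum (fun ω : S => prefixWeight w n ω) a)
    (hc : HasSum (fun k : K => w n k) c) :
    HasSum (fun ω : {ω : ℕ → ℕ | Function.update ω n b ∈ S ∧ ω n ∈ K} => prefixWeight w (n + 1) ω)
      (a * c) := by
  rw [← (updateEquiv hS K).hasSum_iff]
  have hmul : HasSum (fun p : S × K => prefixWeight w n p.1 * w n p.2) (a * c) :=
    ha.mul hc (summable_mul_of_summable_norm (f := fun ω : S => prefixWeight w n ω)
      (g := fun k : K => w n k) ha.summable.norm hc.summable.norm)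
  exact hmul.congr_fun fun p => prefixWeight_succ_update w n p.1 p.2

lemma hasSum_truncatedPos_succ {Z c : ℝ}
    (hZ : HasSum (fun ω : truncated g n => prefixWeight w n ω) Z)
    (hc : HasSum (fun k => w n (k + 1)) c) :
    HasSum (fun ω : truncatedPos g (n + 1) => prefixWeight w (n + 1) ω) (Z * c) := by
  have hc' : HasSum (fun k : ({0}ᶜ : Set ℕ) => w n k) c := by
    have hcompl : ({0}ᶜ : Set ℕ) = Set.range Nat.succ := by
      ext k
      simp [Nat.range_succ, Nat.pos_iff_ne_zero]
    rw [hcompl]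
    exact (Nat.succ_injective.hasSum_range_iff (f := w n)).mpr hc
  rw [truncatedPos_succ]
  exact hasSum_prefixWeight_succ (fun ω hω => hω.2 n le_rfl) hZ hc'

lemma hasSum_truncated_succ {Z P c : ℝ}
    (hZ : HasSum (fun ω : truncated g n => prefixWeight w n ω) Z)
    (hP : HasSum (fun ω : truncatedPos g n => prefixWeight w n ω) P)
    (hc : HasSum (fun k => w n (k + 1)) c) :
    HasSum (fun ω : truncated g (n + 1) => prefixWeight w (n + 1) ω) (Z * c + P * w n 0) := by
  have hzero : HasSum (fun k : ({0} : Set ℕ) => w n k) (w n 0) := hasSum_unique _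
  have hpos := hasSum_truncatedPos_succ hZ hc
  have hzero' := hasSum_prefixWeight_succ (fun ω hω => hω.1.2 n le_rfl) hP hzero
  rw [truncated_succ]
  refine HasSum.add_disjoint (f := prefixWeight w (n + 1)) ?_ hpos hzero'
  exact Set.disjoint_left.mpr fun ω hω h => hω.2 n rfl h.2

end TransferMatrix

section OddPartitionFunction

/-- The ground state of `Ho`: the sequence with which its members eventually agree. -/
def oddGround (i : ℕ) : ℕ := if (i + 1) % 2 = 1 then 1 else 0

/-- The factor that an entry `k` at place `i` contributes to `y ^ A'fun ω * t ^ B'fun ω`. Both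
exponents are measured relative to the ground state, which has weight `1` at every place. -/
noncomputable def siteWeight (y t : ℝ) (i k : ℕ) : ℝ :=
  y ^ (((i : ℤ) + 1) * (k - oddGround i)) * t ^ (2 * (min k 1 - oddGround i : ℤ))

lemma oddGround_two_mul (N : ℕ) : oddGround (2 * N) = 1 := if_pos (by omega)

lemma oddGround_two_mul_add_one (N : ℕ) : oddGround (2 * N + 1) = 0 := if_neg (by omega)

section Weight

variable {n : ℕ} {ω : ℕ → ℕ}

lemma A'fun_eq_sum (hω : ∀ i ≥ n, ω i = oddGround i) :
    A'fun ω = ∑ i ∈ Finset.range n, ((i : ℤ) + 1) * (ω i - oddGround i) := by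
  rw [A'fun, finsum_eq_sum_of_support_subset (s := Finset.range n)]
  · refine Finset.sum_congr rfl fun i _ => ?_
    grind [oddGround]
  · refine Function.support_subset_iff'.mpr fun i hi => ?_
    have := hω i (by simpa using hi)
    grind [oddGround]

lemma B'fun_eq_sum (hω : ∀ i ≥ n, ω i = oddGround i) :
    B'fun ω = ∑ i ∈ Finset.range n, 2 * (min (ω i) 1 - oddGround i : ℤ) := by
  rw [B'fun, finsum_eq_sum_of_support_subset (s := Finset.range n),
    finsum_eq_sum_of_support_subset (s := Finset.range n), ← Finset.sum_sub_distrib,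
    Finset.mul_sum]
  · refine Finset.sum_congr rfl fun i _ => ?_
    grind [oddGround]
  all_goals
    refine Function.support_subset_iff'.mpr fun i hi => ?_
    have := hω i (by simpa using hi)
    grind [oddGround]

lemma zpow_finsetSum₀ {ι G₀ : Type*} [CommGroupWithZero G₀] {a : G₀} (ha : a ≠ 0) (s : Finset ι)
    (f : ι → ℤ) : a ^ (∑ i ∈ s, f i) = ∏ i ∈ s, a ^ f i := by
  classical
  induction s using Finset.induction_on with
  | empty => simp
  | insert i s hi ih => rw [Finset.sum_insert hi, Finset.prod_insert hi, zpow_add₀ ha, ih]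

lemma zpow_A'fun_mul_zpow_B'fun {y t : ℝ} (hy : y ≠ 0) (ht : t ≠ 0)
    (hω : ∀ i ≥ n, ω i = oddGround i) :
    y ^ A'fun ω * t ^ B'fun ω = prefixWeight (siteWeight y t) n ω := by
  rw [A'fun_eq_sum hω, B'fun_eq_sum hω, zpow_finsetSum₀ hy, zpow_finsetSum₀ ht,
    ← Finset.prod_mul_distrib]
  rfl

end Weight

section Truncation

/- The ground state is positive at place `2 * N`, so no pair of zeros can straddle the cut. This is
why only the truncations at even places are used. -/
lemma truncated_oddGround_subset_Ho (N : ℕ) : truncated oddGround (2 * N) ⊆ Ho := by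
  rintro ω ⟨hzero, htail⟩
  refine ⟨fun i hi => ?_, 2 * N, htail⟩
  rcases lt_or_ge (i + 1) (2 * N) with h | h
  · exact hzero i h hi
  · have hsucc := htail (i + 1) h
    have hself := htail i
    grind [oddGround]

lemma monotone_truncated_oddGround : Monotone fun N => truncated oddGround (2 * N) :=
  fun _ _ hle _ hω => ⟨fun i _ => (truncated_oddGround_subset_Ho _ hω).1 i,
    fun i hi => hω.2 i (by omega)⟩

lemma iUnion_truncated_oddGround : ⋃ N, truncated oddGround (2 * N) = Ho := by
  refine (Set.iUnion_subset truncated_oddGround_subset_Ho).antisymm fun ω hω => ?_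
  obtain ⟨hzero, N, htail⟩ := hω
  exact Set.mem_iUnion.mpr ⟨N, fun i _ => hzero i, fun i hi => htail i (by omega)⟩

end Truncation

section SiteWeight

lemma siteWeight_even_zero (y t : ℝ) (N : ℕ) :
    siteWeight y t (2 * N) 0 = (t ^ 2 * y ^ (2 * N + 1))⁻¹ := by
  have hy : (((2 * N : ℕ) : ℤ) + 1) * ((0 : ℕ) - (1 : ℕ)) = -(2 * N + 1 : ℕ) := by simp
  have ht : 2 * (((min 0 1 : ℕ) : ℤ) - (1 : ℕ)) = -(2 : ℕ) := by simp
  rw [siteWeight, oddGround_two_mul, hy, ht, zpow_neg, zpow_neg, zpow_natCast, zpow_natCast,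
    mul_inv, mul_comm]

lemma siteWeight_even_succ (y t : ℝ) (N k : ℕ) :
    siteWeight y t (2 * N) (k + 1) = (y ^ (2 * N + 1)) ^ k := by
  have hy : (((2 * N : ℕ) : ℤ) + 1) * ((k + 1 : ℕ) - (1 : ℕ)) = ((2 * N + 1) * k : ℕ) := by
    push_cast; ring
  have ht : 2 * (((min (k + 1) 1 : ℕ) : ℤ) - (1 : ℕ)) = 0 := by simp
  rw [siteWeight, oddGround_two_mul, hy, ht, zpow_zero, zpow_natCast, pow_mul, mul_one]

lemma siteWeight_odd_zero (y t : ℝ) (N : ℕ) : siteWeight y t (2 * N + 1) 0 = 1 := by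
  simp [siteWeight, oddGround_two_mul_add_one]

lemma siteWeight_odd_succ (y t : ℝ) (N k : ℕ) :
    siteWeight y t (2 * N + 1) (k + 1) = t ^ 2 * y ^ (2 * N + 2) * (y ^ (2 * N + 2)) ^ k := by
  have hy : (((2 * N + 1 : ℕ) : ℤ) + 1) * ((k + 1 : ℕ) - (0 : ℕ)) =
      ((2 * N + 2) * (k + 1) : ℕ) := by
    push_cast; ring
  have ht : 2 * (((min (k + 1) 1 : ℕ) : ℤ) - (0 : ℕ)) = (2 : ℕ) := by simp
  rw [siteWeight, oddGround_two_mul_add_one, hy, ht, zpow_natCast, zpow_natCast, pow_mul]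
  ring

variable {y : ℝ}

lemma hasSum_siteWeight_even (hy : |y| < 1) (t : ℝ) (N : ℕ) :
    HasSum (fun k => siteWeight y t (2 * N) (k + 1)) (1 - y ^ (2 * N + 1))⁻¹ := by
  simp only [siteWeight_even_succ]
  refine hasSum_geometric_of_abs_lt_one ?_
  simpa only [abs_pow] using pow_lt_one₀ (abs_nonneg y) hy (Nat.succ_ne_zero _)

lemma hasSum_siteWeight_odd (hy : |y| < 1) (t : ℝ) (N : ℕ) :
    HasSum (fun k => siteWeight y t (2 * N + 1) (k + 1))
      (t ^ 2 * y ^ (2 * N + 2) * (1 - y ^ (2 * N + 2))⁻¹) := by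
  simp only [siteWeight_odd_succ]
  refine (hasSum_geometric_of_abs_lt_one ?_).mul_left _
  simpa only [abs_pow] using pow_lt_one₀ (abs_nonneg y) hy (Nat.succ_ne_zero _)

end SiteWeight

section ClosedForm

variable {x t : ℝ}

/- For `x = q ^ 2` the condition `x * t ^ 2 = (1 + x) ^ 2` says that `t = ±(q + q⁻¹)`. -/
lemma hasSum_truncated_odd_of_even (hx0 : 0 < x) (hx1 : x < 1) (ht : x * t ^ 2 = (1 + x) ^ 2)
    {N : ℕ}
    (hZ : HasSum (fun ω : truncated oddGround (2 * N) =>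
      prefixWeight (siteWeight (x ^ 2) t) (2 * N) ω)
        ((1 + x ^ (2 * N + 1)) / ((1 + x) * qPochhammer x (2 * N))))
    (hP : HasSum (fun ω : truncatedPos oddGround (2 * N) =>
      prefixWeight (siteWeight (x ^ 2) t) (2 * N) ω) (x ^ (2 * N) / qPochhammer x (2 * N))) :
    HasSum (fun ω : truncated oddGround (2 * N + 1) =>
      prefixWeight (siteWeight (x ^ 2) t) (2 * N + 1) ω)
        ((1 + x ^ (2 * N + 2)) / (x ^ (2 * N + 1) * (1 + x) ^ 2 * qPochhammer x (2 * N + 1))) ∧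
    HasSum (fun ω : truncatedPos oddGround (2 * N + 1) =>
      prefixWeight (siteWeight (x ^ 2) t) (2 * N + 1) ω)
        (1 / ((1 + x) * qPochhammer x (2 * N + 1))) := by
  have hx : ‖x‖ < 1 := by rwa [Real.norm_of_nonneg hx0.le]
  have hc := hasSum_siteWeight_even (norm_sq_lt_one hx) t N
  have hD : qPochhammer x (2 * N) ≠ 0 := qPochhammer_ne_zero hx _
  have hX : x ^ (2 * N + 1) < 1 := pow_lt_one₀ hx0.le hx1 (Nat.succ_ne_zero _)
  have hsub : 1 - x ^ (2 * N + 1) ≠ 0 := (sub_pos.mpr hX).ne'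
  have hadd : 1 + x ^ (2 * N + 1) ≠ 0 := by positivity
  have hy : 1 - (x ^ 2) ^ (2 * N + 1) = (1 - x ^ (2 * N + 1)) * (1 + x ^ (2 * N + 1)) := by ring
  have ht' : t ^ 2 = (1 + x) ^ 2 / x := by rw [← ht]; field_simp
  rw [hy] at hc
  constructor
  · convert hasSum_truncated_succ hZ hP hc using 1
    rw [siteWeight_even_zero, ht', qPochhammer_succ]
    field_simp
    ring
  · convert hasSum_truncatedPos_succ hZ hc using 1
    rw [qPochhammer_succ]
    field_simp

lemma hasSum_truncated_even_of_odd (hx0 : 0 < x) (hx1 : x < 1) (ht : x * t ^ 2 = (1 + x) ^ 2)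
    {N : ℕ}
    (hZ : HasSum (fun ω : truncated oddGround (2 * N + 1) =>
      prefixWeight (siteWeight (x ^ 2) t) (2 * N + 1) ω)
        ((1 + x ^ (2 * N + 2)) / (x ^ (2 * N + 1) * (1 + x) ^ 2 * qPochhammer x (2 * N + 1))))
    (hP : HasSum (fun ω : truncatedPos oddGround (2 * N + 1) =>
      prefixWeight (siteWeight (x ^ 2) t) (2 * N + 1) ω)
        (1 / ((1 + x) * qPochhammer x (2 * N + 1)))) :
    HasSum (fun ω : truncated oddGround (2 * N + 2) =>
      prefixWeight (siteWeight (x ^ 2) t) (2 * N + 2) ω)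
        ((1 + x ^ (2 * N + 3)) / ((1 + x) * qPochhammer x (2 * N + 2))) ∧
    HasSum (fun ω : truncatedPos oddGround (2 * N + 2) =>
      prefixWeight (siteWeight (x ^ 2) t) (2 * N + 2) ω)
        (x ^ (2 * N + 2) / qPochhammer x (2 * N + 2)) := by
  have hx : ‖x‖ < 1 := by rwa [Real.norm_of_nonneg hx0.le]
  have hc := hasSum_siteWeight_odd (norm_sq_lt_one hx) t N
  have hD : qPochhammer x (2 * N + 1) ≠ 0 := qPochhammer_ne_zero hx _
  have hX : x ^ (2 * N + 2) < 1 := pow_lt_one₀ hx0.le hx1 (Nat.succ_ne_zero _)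
  have hsub : 1 - x ^ (2 * N + 2) ≠ 0 := (sub_pos.mpr hX).ne'
  have hadd : 1 + x ^ (2 * N + 2) ≠ 0 := by positivity
  have hy : 1 - (x ^ 2) ^ (2 * N + 2) = (1 - x ^ (2 * N + 2)) * (1 + x ^ (2 * N + 2)) := by ring
  have ht' : t ^ 2 = (1 + x) ^ 2 / x := by rw [← ht]; field_simp
  rw [hy, ht'] at hc
  constructor
  · convert hasSum_truncated_succ hZ hP hc using 1
    rw [siteWeight_odd_zero, qPochhammer_succ]
    field_simp
    ring
  · convert hasSum_truncatedPos_succ hZ hc using 1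
    rw [qPochhammer_succ]
    field_simp
    ring

theorem hasSum_truncated_even (hx0 : 0 < x) (hx1 : x < 1) (ht : x * t ^ 2 = (1 + x) ^ 2) (N : ℕ) :
    HasSum (fun ω : truncated oddGround (2 * N) =>
      prefixWeight (siteWeight (x ^ 2) t) (2 * N) ω)
        ((1 + x ^ (2 * N + 1)) / ((1 + x) * qPochhammer x (2 * N))) ∧
    HasSum (fun ω : truncatedPos oddGround (2 * N) =>
      prefixWeight (siteWeight (x ^ 2) t) (2 * N) ω) (x ^ (2 * N) / qPochhammer x (2 * N)) := by
  induction N with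
  | zero =>
    have hx : 1 + x ≠ 0 := by positivity
    have hempty : HasSum (fun ω : ({oddGround} : Set (ℕ → ℕ)) =>
        prefixWeight (siteWeight (x ^ 2) t) 0 ω) 1 := by
      simp only [prefixWeight, Finset.range_zero, Finset.prod_empty]
      exact hasSum_unique _
    rw [Nat.mul_zero, truncated_zero, truncatedPos_zero]
    constructor <;> simpa [hx] using hempty
  | succ N ih =>
    obtain ⟨hZ, hP⟩ := hasSum_truncated_odd_of_even hx0 hx1 ht ih.1 ih.2
    exact hasSum_truncated_even_of_odd hx0 hx1 ht hZ hP

theorem Sodd_sq (hx0 : 0 < x) (hx1 : x < 1) (ht : x * t ^ 2 = (1 + x) ^ 2) :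
    Sodd (x ^ 2) t = ((1 + x) * ∏' n : ℕ, (1 - x ^ (n + 1)))⁻¹ := by
  have hx : ‖x‖ < 1 := by rwa [Real.norm_of_nonneg hx0.le]
  have ht0 : t ≠ 0 := by rintro rfl; nlinarith
  have hnonneg (ω : ℕ → ℕ) : 0 ≤ (x ^ 2) ^ A'fun ω * t ^ B'fun ω := by
    rw [B'fun]
    exact mul_nonneg (zpow_nonneg (sq_nonneg x) _) ((even_two_mul _).zpow_nonneg t)
  have htrunc (N : ℕ) :
      HasSum (fun ω : truncated oddGround (2 * N) => (x ^ 2) ^ A'fun ω * t ^ B'fun ω)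
        ((1 + x ^ (2 * N + 1)) / ((1 + x) * qPochhammer x (2 * N))) :=
    (hasSum_truncated_even hx0 hx1 ht N).1.congr_fun fun ω =>
      zpow_A'fun_mul_zpow_B'fun (by positivity) ht0 ω.2.2
  have htwo : Tendsto (fun N : ℕ => 2 * N) atTop atTop := tendsto_id.const_mul_atTop' two_pos
  have hnum := (tendsto_pow_atTop_nhds_zero_of_norm_lt_one hx).comp
    ((tendsto_add_atTop_nat 1).comp htwo)
  have hden := (tendsto_qPochhammer hx).comp htwo
  have hlim : Tendsto (fun N => (1 + x ^ (2 * N + 1)) / ((1 + x) * qPochhammer x (2 * N))) atTop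
      (𝓝 ((1 + 0) / ((1 + x) * ∏' n : ℕ, (1 - x ^ (n + 1))))) :=
    (hnum.const_add 1).div (hden.const_mul (1 + x))
      (mul_ne_zero (by positivity) (tprod_one_sub_pow_succ_ne_zero hx))
  rw [add_zero, one_div] at hlim
  rw [Sodd, ← iUnion_truncated_oddGround]
  exact (hasSum_iUnion_of_monotone hnonneg monotone_truncated_oddGround htrunc hlim).tsum_eq

end ClosedForm

end OddPartitionFunction

theorem statement4_general (q z : ℝ) (hq0 : q ≠ 0) (hq1 : |q| < 1) (hz : z ≠ 0) :
    Summable (fun ℓ : ℤ => q ^ ((2 * ℓ) ^ 2) * z ^ (2 * ℓ)) ∧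
    Multipliable (fun i : ℕ => (1 + q ^ (2 * i + 1) * z) * (1 + q ^ (2 * i + 1) * z⁻¹)) ∧
    Multipliable (fun i : ℕ => (1 - q ^ (2 * i + 1) * z) * (1 - q ^ (2 * i + 1) * z⁻¹)) ∧
    2 * (1 + q ^ 2) * Sodd (q ^ 4) (q + q⁻¹) * (∑' ℓ : ℤ, q ^ ((2 * ℓ) ^ 2) * z ^ (2 * ℓ)) =
      (∏' i : ℕ, (1 + q ^ (2 * i + 1) * z) * (1 + q ^ (2 * i + 1) * z⁻¹)) +
      (∏' i : ℕ, (1 - q ^ (2 * i + 1) * z) * (1 - q ^ (2 * i + 1) * z⁻¹)) := by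
  have hneg (i : ℕ) : (1 - q ^ (2 * i + 1) * z) * (1 - q ^ (2 * i + 1) * z⁻¹) =
      (1 + q ^ (2 * i + 1) * -z) * (1 + q ^ (2 * i + 1) * (-z)⁻¹) := by
    rw [inv_neg, mul_neg, mul_neg, sub_eq_add_neg, sub_eq_add_neg]
  simp only [hneg]
  refine ⟨?_, multipliable_jacobi hq1 z, multipliable_jacobi hq1 (-z), ?_⟩
  · exact (summable_zpow_sq_mul_zpow hq1 z).comp_injective (mul_right_injective₀ two_ne_zero)
  have hS : Sodd (q ^ 4) (q + q⁻¹) = ((1 + q ^ 2) * ∏' n : ℕ, (1 - (q ^ 2) ^ (n + 1)))⁻¹ := by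
    rw [show q ^ 4 = (q ^ 2) ^ 2 by ring]
    refine Sodd_sq (by positivity) ((sq_lt_one_iff_abs_lt_one q).mpr hq1) ?_
    field_simp
    ring
  rw [tprod_jacobi_eq hq0 hq1 hz, tprod_jacobi_eq hq0 hq1 (neg_ne_zero.mpr hz), ← mul_add,
    tsum_zpow_sq_add_tsum_neg hq1, hS]
  field_simp

theorem statement4 (q z : ℝ) (hq0 : 0 < q) (hq1 : q < 1) (hz : 0 < z) :
    Summable (fun ℓ : ℤ => q ^ ((2 * ℓ) ^ 2) * z ^ (2 * ℓ)) ∧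
    Multipliable (fun i : ℕ => (1 + q ^ (2 * i + 1) * z) * (1 + q ^ (2 * i + 1) * z⁻¹)) ∧
    Multipliable (fun i : ℕ => (1 - q ^ (2 * i + 1) * z) * (1 - q ^ (2 * i + 1) * z⁻¹)) ∧
    2 * (1 + q ^ 2) * Sodd (q ^ 4) (q + q⁻¹) * (∑' ℓ : ℤ, q ^ ((2 * ℓ) ^ 2) * z ^ (2 * ℓ)) =
      (∏' i : ℕ, (1 + q ^ (2 * i + 1) * z) * (1 + q ^ (2 * i + 1) * z⁻¹)) +
      (∏' i : ℕ, (1 - q ^ (2 * i + 1) * z) * (1 - q ^ (2 * i + 1) * z⁻¹)) :=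
  statement4_general q z hq0.ne' (by rwa [abs_of_pos hq0]) hz.ne'
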